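/- Proposition 1, (ii) ⇔ (iii): Let V be a finite-dimensional real vector space and K ⊆ V a convex cone that spans V. Suppose each P_J maps K into K, and define F_J := {s ∈ K | P_J(s) = s}. Then P_{123} = P^(3) if and only if F_{123} ⊆ span(F_{12} ∪ F_{13} ∪ F_{23}), the linear span of the union of the faces of two-slit filtered states. -/

import Mathlib

/-!
Commuting idempotents `f` and `g` have the join `f + g - f * g`, whose range is the sum of the two
ranges. Joining `P₁₂`, `P₁₃` and `P₂₃` by this formula gives exactly `P⁽³⁾`, so `P⁽³⁾` is the
projection onto `range P₁₂ ⊔ range P₁₃ ⊔ range P₂₃` lying below `P₁₂₃`, and it equals `P₁₂₃` as soon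
as it has the same range. Finally, a positive projection sends the spanning set `K` onto its
filtered states, so its range is the span of these.
-/

open LinearMap Submodule

section Idempotent

variable {R V : Type*} [Ring R] [AddCommGroup V] [Module R V] {K : Set V} {f g : Module.End R V}

theorem range_add_sub_mul_of_commute (hf : IsIdempotentElem f) (hg : IsIdempotentElem g)
    (hfg : Commute f g) : range (f + g - f * g) = range f ⊔ range g := by
  have join_mul_left : (f + g - f * g) * f = f := by
    rw [sub_mul, add_mul, hf.eq, mul_assoc, ← hfg.eq, hf.mul_self_mul, add_sub_cancel_right]
  have join_mul_right : (f + g - f * g) * g = g := by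
    rw [sub_mul, add_mul, hg.eq, hg.mul_mul_self, add_sub_cancel_left]
  have join_eq : f + g - f * g = f * (1 - g) + g := by
    rw [mul_sub, mul_one, sub_add_eq_add_sub]
  refine le_antisymm ?_ (sup_le ?_ ?_)
  · rw [join_eq]
    rintro _ ⟨x, rfl⟩
    exact add_mem_sup (mem_range_self f _) (mem_range_self g x)
  · conv_lhs => rw [← join_mul_left]
    exact range_comp_le_range f (f + g - f * g)
  · conv_lhs => rw [← join_mul_right]
    exact range_comp_le_range g (f + g - f * g)

theorem eq_iff_range_le_of_mul_eq_left (hg : IsIdempotentElem g) (hgf : g * f = g) :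
    f = g ↔ range f ≤ range g := by
  rw [← LinearMap.IsIdempotentElem.comp_eq_right_iff hg, ← Module.End.mul_eq_comp, hgf, eq_comm]

/-- The states in `K` that pass the filter `f` unchanged: the face `F_J` of the paper is
`filteredStates K (P J)`. -/
def filteredStates (K : Set V) (f : Module.End R V) : Set V :=
  {s ∈ K | f s = s}

theorem image_eq_filteredStates (hf : IsIdempotentElem f) (hfK : Set.MapsTo f K K) :
    f '' K = filteredStates K f := by
  refine Set.Subset.antisymm ?_ fun s hs => ⟨s, hs⟩
  rintro _ ⟨s, hs, rfl⟩
  exact ⟨hfK hs, LinearMap.congr_fun hf.eq s⟩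

theorem span_filteredStates (hK : span R K = ⊤) (hf : IsIdempotentElem f)
    (hfK : Set.MapsTo f K K) : span R (filteredStates K f) = range f := by
  rw [← image_eq_filteredStates hf hfK, span_image, hK, Submodule.map_top]

end Idempotent

section MeetFamily

variable {R V α : Type*} [Ring R] [AddCommGroup V] [Module R V] [SemilatticeInf α]
  {P : α → Module.End R V}

theorem isIdempotentElem_of_mul_eq_inf (hmul : ∀ a b, P a * P b = P (a ⊓ b)) (a : α) :
    IsIdempotentElem (P a) := by
  rw [IsIdempotentElem, hmul, inf_idem]

theorem commute_of_mul_eq_inf (hmul : ∀ a b, P a * P b = P (a ⊓ b)) (a b : α) :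
    Commute (P a) (P b) := by
  rw [Commute, SemiconjBy, hmul, hmul, inf_comm]

/-- The inclusion–exclusion combination of the filters at `a`, `b` and `c`. For the three pairs of
slits `{0, 1}`, `{0, 2}` and `{1, 2}` it is `P⁽³⁾`, its last term being `P ∅ = 0`. -/
def inclusionExclusion (P : α → Module.End R V) (a b c : α) : Module.End R V :=
  P a + P b + P c - P (a ⊓ b) - P (a ⊓ c) - P (b ⊓ c) + P (a ⊓ b ⊓ c)

theorem inclusionExclusion_eq_join (hmul : ∀ a b, P a * P b = P (a ⊓ b)) (a b c : α) :
    inclusionExclusion P a b c =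
      (P a + P b - P a * P b) + P c - (P a + P b - P a * P b) * P c := by
  simp only [inclusionExclusion, sub_mul, add_mul, hmul]
  abel

theorem commute_join_of_mul_eq_inf (hmul : ∀ a b, P a * P b = P (a ⊓ b)) (a b c : α) :
    Commute (P a + P b - P a * P b) (P c) := by
  rw [hmul]
  exact ((commute_of_mul_eq_inf hmul a c).add_left (commute_of_mul_eq_inf hmul b c)).sub_left
    (commute_of_mul_eq_inf hmul (a ⊓ b) c)

theorem isIdempotentElem_join_of_mul_eq_inf (hmul : ∀ a b, P a * P b = P (a ⊓ b)) (a b : α) :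
    IsIdempotentElem (P a + P b - P a * P b) :=
  (isIdempotentElem_of_mul_eq_inf hmul a).add_sub_mul_of_commute (commute_of_mul_eq_inf hmul a b)
    (isIdempotentElem_of_mul_eq_inf hmul b)

theorem isIdempotentElem_inclusionExclusion (hmul : ∀ a b, P a * P b = P (a ⊓ b)) (a b c : α) :
    IsIdempotentElem (inclusionExclusion P a b c) := by
  rw [inclusionExclusion_eq_join hmul]
  exact (isIdempotentElem_join_of_mul_eq_inf hmul a b).add_sub_mul_of_commute
    (commute_join_of_mul_eq_inf hmul a b c) (isIdempotentElem_of_mul_eq_inf hmul c)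

theorem range_inclusionExclusion (hmul : ∀ a b, P a * P b = P (a ⊓ b)) (a b c : α) :
    range (inclusionExclusion P a b c) = range (P a) ⊔ range (P b) ⊔ range (P c) := by
  have idem := isIdempotentElem_of_mul_eq_inf hmul
  rw [inclusionExclusion_eq_join hmul,
    range_add_sub_mul_of_commute (isIdempotentElem_join_of_mul_eq_inf hmul a b) (idem c)
      (commute_join_of_mul_eq_inf hmul a b c),
    range_add_sub_mul_of_commute (idem a) (idem b) (commute_of_mul_eq_inf hmul a b)]

theorem inclusionExclusion_mul_of_le (hmul : ∀ a b, P a * P b = P (a ⊓ b)) {a b c d : α}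
    (ha : a ≤ d) (hb : b ≤ d) (hc : c ≤ d) :
    inclusionExclusion P a b c * P d = inclusionExclusion P a b c := by
  have mul_of_le {e : α} (he : e ≤ d) : P e * P d = P e := by rw [hmul, inf_eq_left.mpr he]
  simp only [inclusionExclusion, sub_mul, add_mul, mul_of_le ha, mul_of_le hb, mul_of_le hc,
    mul_of_le (inf_le_of_left_le ha), mul_of_le (inf_le_of_left_le hb),
    mul_of_le (inf_le_of_right_le hc)]

theorem P123_eq_P3_iff_face_subset_span_general {K : Set V} (hK : span R K = ⊤)
    (hmul : ∀ a b, P a * P b = P (a ⊓ b)) (hPK : ∀ a, Set.MapsTo (P a) K K) {a b c d : α}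
    (ha : a ≤ d) (hb : b ≤ d) (hc : c ≤ d) :
    P d = inclusionExclusion P a b c ↔
      filteredStates K (P d) ⊆
        (span R (filteredStates K (P a) ∪ filteredStates K (P b) ∪ filteredStates K (P c)) :
          Submodule R V) := by
  have span_face (e : α) : span R (filteredStates K (P e)) = range (P e) :=
    span_filteredStates hK (isIdempotentElem_of_mul_eq_inf hmul e) (hPK e)
  rw [eq_iff_range_le_of_mul_eq_left (isIdempotentElem_inclusionExclusion hmul a b c)
      (inclusionExclusion_mul_of_le hmul ha hb hc),
    range_inclusionExclusion hmul, ← span_le, span_union, span_union]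
  simp only [span_face]

end MeetFamily

theorem inclusionExclusion_pairs_fin_three {R V : Type*} [Ring R] [AddCommGroup V] [Module R V]
    {P : Finset (Fin 3) → Module.End R V} (hP0 : P ∅ = 0) :
    inclusionExclusion P {0, 1} {0, 2} {1, 2} =
      P {0, 1} + P {0, 2} + P {1, 2} - P {0} - P {1} - P {2} := by
  simp [inclusionExclusion, hP0]

/-- Proposition 1, (ii) ⇔ (iii): `P₁₂₃ = P⁽³⁾` if and only if the face of
three-slit-filtered states is contained in the linear span of the union of the
faces of two-slit-filtered states. -/
theorem P123_eq_P3_iff_face_subset_span {V : Type*} [AddCommGroup V] [Module ℝ V]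
    [FiniteDimensional ℝ V]
    (K : Set V)
    (hadd : ∀ s ∈ K, ∀ t ∈ K, s + t ∈ K)
    (hsmul : ∀ (a : ℝ), 0 ≤ a → ∀ s ∈ K, a • s ∈ K)
    (hspan : Submodule.span ℝ K = ⊤)
    (P : Finset (Fin 3) → V →ₗ[ℝ] V)
    (hP0 : P ∅ = 0)
    (hmul : ∀ J L : Finset (Fin 3), P J ∘ₗ P L = P (J ∩ L))
    (hPK : ∀ J : Finset (Fin 3), ∀ s ∈ K, P J s ∈ K)
    (F : Finset (Fin 3) → Set V)
    (hF : ∀ J : Finset (Fin 3), F J = {s ∈ K | P J s = s}) :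
    P {0, 1, 2} = P {0, 1} + P {0, 2} + P {1, 2} - P {0} - P {1} - P {2} ↔
      F {0, 1, 2} ⊆
        (Submodule.span ℝ (F {0, 1} ∪ F {0, 2} ∪ F {1, 2}) : Submodule ℝ V) := by
  obtain rfl : F = fun J => filteredStates K (P J) := funext hF
  rw [← inclusionExclusion_pairs_fin_three hP0]
  exact P123_eq_P3_iff_face_subset_span_general hspan hmul hPK (by decide) (by decide) (by decide)
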